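/- Let n ∈ ℕ, let p₁, p₂, p, q₁, q₂, q ∈ [1,∞] satisfy 1/p = 1/p₁ + 1/p₂ and 1/q₁ + 1/q₂ = 1 + 1/q. Let K₁, K₂ : ℝⁿ × ℝⁿ → ℂ be measurable kernels, and let β₁, β₂ : ℝⁿ → [0,∞] be measurable with: for every Y ∈ ℝⁿ, eLpNorm of (X ↦ K₁(X, X+Y)) with exponent p₁ is ≤ β₁(Y) and eLpNorm of (X ↦ K₂(X, X+Y)) with exponent p₂ is ≤ β₂(Y); assume moreover that eLpNorm of β₁ with exponent q₁ and eLpNorm of β₂ with exponent q₂ are finite. Assume that for all x, z ∈ ℝⁿ the function y ↦ K₁(x,y)·K₂(y,z) is integrable and set K(x,z) := ∫_{ℝⁿ} K₁(x,y) K₂(y,z) dy. Then the function β : ℝⁿ → [0,∞] defined by β(Y) := ∫_{ℝⁿ} β₁(Z) β₂(Y−Z) dZ satisfies: for every Y ∈ ℝⁿ, the eLpNorm of (X ↦ K(X, X+Y)) with exponent p is at most β(Y), and the eLpNorm of β with exponent q is at most the product of the eLpNorms of β₁ (exponent q₁) and β₂ (exponent q₂). (This is the kernel-level form of Corollary 2.14: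 the Moyal product maps M^{p₁,q₁} × M^{p₂,q₂} continuously into M^{p,q}.) -/

import Mathlib

/-!
The first estimate is Minkowski's integral inequality combined with Hölder's inequality.
Substituting `y = X + Z`, the modulus of `K (X, X + Y)` is at most
`∫⁻ Z, ‖K₁ (X, X + Z)‖ₑ * ‖K₂ (X + Z, X + Y)‖ₑ`. For fixed `Z`, Hölder's inequality and translation
invariance bound the `Lᵖ` seminorm in `X` of the integrand by `β₁ Z * β₂ (Y - Z)`, and Minkowski's
inequality (`eLpNorm_lintegral_le`) allows integrating this bound in `Z`.

Minkowski's inequality is used with a measurable majorant `b y` of the `Lᵖ` seminorm of `F · y`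
rather than the seminorm itself, which avoids any measurability question for
`y ↦ essSup (F · y)` when `p = ∞`. For `p < ∞` it follows from
Hölder's inequality applied to `F = (Fᵖ b¹⁻ᵖ)^(1/p) b^(1-1/p)`.

The second estimate is Young's convolution inequality for `[0,∞]`-valued functions. For finite `q`
(`young_lintegral`) it comes from the three-factor Hölder inequality applied to
`f g = (f^q₁ g^q₂)^(1/q) (f^q₁)^(1/q₁-1/q) (g^q₂)^(1/q₂-1/q)`, and for `q = ∞` from the usual
Hölder inequality.
-/

open MeasureTheory
open scoped ENNReal NNReal

/-- The `Lq` seminorm (`eLpNorm`) of an `[0,∞]`-valued function, defined exactly as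
`MeasureTheory.eLpNorm` but for `ℝ≥0∞`-valued functions. -/
noncomputable def eLpNormENN {α : Type*} [MeasurableSpace α] (f : α → ℝ≥0∞) (q : ℝ≥0∞)
    (μ : Measure α) : ℝ≥0∞ :=
  if q = 0 then 0
  else if q = ∞ then essSup f μ
  else (∫⁻ x, f x ^ q.toReal ∂μ) ^ (1 / q.toReal)

/-! ### Minkowski's integral inequality -/

/-- Minkowski's integral inequality for finite real exponents, in terms of `p`-th powers and with a
measurable majorant `b`. -/
theorem lintegral_rpow_lintegral_le {α β : Type*} [MeasurableSpace α] [MeasurableSpace β]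
    {μ : Measure α} {ν : Measure β} [SFinite μ] [SFinite ν] {p : ℝ} (hp : 1 ≤ p)
    {F : α → β → ℝ≥0∞} (hF : Measurable (Function.uncurry F)) {b : β → ℝ≥0∞} (hb : Measurable b)
    (h : ∀ y, ∫⁻ x, F x y ^ p ∂μ ≤ b y ^ p) :
    ∫⁻ x, (∫⁻ y, F x y ∂ν) ^ p ∂μ ≤ (∫⁻ y, b y ∂ν) ^ p := by
  have hp0 : 0 < p := by linarith
  by_cases hB : ∫⁻ y, b y ∂ν = ∞
  · rw [hB, ENNReal.top_rpow_of_pos hp0]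
    exact le_top
  have hFx : ∀ x, Measurable (F x) := fun x => hF.comp measurable_prodMk_left
  have hFy : ∀ y, Measurable (fun x => F x y) := fun y => hF.comp measurable_prodMk_right
  -- The factorization of `F` below fails only where `b y = 0` (there `F · y` vanishes a.e.) and
  -- where `b y = ∞` (a null set of `y`).
  have hfac : ∀ᵐ x ∂μ, ∀ᵐ y ∂ν, F x y = 0 ∨ (b y ≠ 0 ∧ b y ≠ ∞) := by
    have hms : MeasurableSet {z : α × β | F z.1 z.2 = 0 ∨ (b z.2 ≠ 0 ∧ b z.2 ≠ ∞)} := by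
      have hb2 : Measurable (fun z : α × β => b z.2) := hb.comp measurable_snd
      exact (hF (measurableSet_singleton 0)).union
        ((hb2 (measurableSet_singleton 0).compl).inter (hb2 (measurableSet_singleton ∞).compl))
    rw [Measure.ae_ae_comm hms]
    filter_upwards [ae_lt_top hb hB] with y hy
    by_cases h0 : b y = 0
    · have hle := h y
      rw [h0, ENNReal.zero_rpow_of_pos hp0, nonpos_iff_eq_zero,
        lintegral_eq_zero_iff ((hFy y).pow_const p)] at hle
      filter_upwards [hle] with x hx
      left
      simpa [hp0, hp0.not_gt] using hx
    · exact Filter.Eventually.of_forall fun x => Or.inr ⟨h0, hy.ne⟩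
  have hpt : ∀ᵐ x ∂μ, (∫⁻ y, F x y ∂ν) ^ p
      ≤ (∫⁻ y, F x y ^ p * b y ^ (1 - p) ∂ν) * (∫⁻ y, b y ∂ν) ^ (p - 1) := by
    filter_upwards [hfac] with x hx
    have hle : ∫⁻ y, F x y ∂ν
        ≤ (∫⁻ y, F x y ^ p * b y ^ (1 - p) ∂ν) ^ (1 / p) * (∫⁻ y, b y ∂ν) ^ (1 - 1 / p) := by
      have hp1 : 1 / p ≤ 1 := by rw [div_le_one hp0]; exact hp
      refine le_trans (lintegral_mono_ae ?_) (ENNReal.lintegral_mul_norm_pow_le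
        (((hFx x).pow_const p).mul (hb.pow_const (1 - p))).aemeasurable hb.aemeasurable
        (by positivity) (sub_nonneg.2 hp1) (by ring))
      filter_upwards [hx] with y hy
      rcases hy with hy | ⟨h0, ht⟩
      · simp [hy]
      · rw [Pi.mul_apply, ENNReal.mul_rpow_of_nonneg _ _ (by positivity), ← ENNReal.rpow_mul,
          ← ENNReal.rpow_mul, mul_assoc, ← ENNReal.rpow_add _ _ h0 ht]
        have e1 : p * (1 / p) = 1 := by field_simp
        have e2 : (1 - p) * (1 / p) + (1 - 1 / p) = 0 := by field_simp; ring
        rw [e1, e2]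
        simp
    calc (∫⁻ y, F x y ∂ν) ^ p ≤ _ := ENNReal.rpow_le_rpow hle hp0.le
      _ = _ := by
        rw [ENNReal.mul_rpow_of_nonneg _ _ hp0.le, ← ENNReal.rpow_mul, ← ENNReal.rpow_mul]
        have e1 : 1 / p * p = 1 := by field_simp
        have e2 : (1 - 1 / p) * p = p - 1 := by field_simp
        rw [e1, e2, ENNReal.rpow_one]
  have hmeas : Measurable (Function.uncurry fun x y => F x y ^ p * b y ^ (1 - p)) :=
    (hF.pow_const p).mul ((hb.comp measurable_snd).pow_const (1 - p))
  calc ∫⁻ x, (∫⁻ y, F x y ∂ν) ^ p ∂μ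
      ≤ ∫⁻ x, (∫⁻ y, F x y ^ p * b y ^ (1 - p) ∂ν) * (∫⁻ y, b y ∂ν) ^ (p - 1) ∂μ :=
        lintegral_mono_ae hpt
    _ = (∫⁻ x, ∫⁻ y, F x y ^ p * b y ^ (1 - p) ∂ν ∂μ) * (∫⁻ y, b y ∂ν) ^ (p - 1) :=
        lintegral_mul_const _ hmeas.lintegral_prod_right'
    _ = (∫⁻ y, ∫⁻ x, F x y ^ p * b y ^ (1 - p) ∂μ ∂ν) * (∫⁻ y, b y ∂ν) ^ (p - 1) := by
        rw [lintegral_lintegral_swap hmeas.aemeasurable]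
    _ ≤ (∫⁻ y, b y ∂ν) * (∫⁻ y, b y ∂ν) ^ (p - 1) := by
        gcongr with y
        rw [lintegral_mul_const _ ((hFy y).pow_const p)]
        refine (mul_le_mul_left (h y) _).trans ?_
        by_cases h0 : b y = 0
        · simp [h0, hp0]
        by_cases ht : b y = ∞
        · simp [ht]
        rw [← ENNReal.rpow_add _ _ h0 ht]
        simp
    _ = (∫⁻ y, b y ∂ν) ^ p := by
        nth_rewrite 1 [← ENNReal.rpow_one (∫⁻ y, b y ∂ν)]
        rw [← ENNReal.rpow_add_of_nonneg _ _ zero_le_one (by linarith)]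
        congr 1
        ring

/-- Minkowski's integral inequality for all exponents in `[1,∞]`, with a measurable majorant `b` of
the partial seminorms. -/
theorem eLpNorm_lintegral_le {α β : Type*} [MeasurableSpace α] [MeasurableSpace β]
    {μ : Measure α} {ν : Measure β} [SFinite μ] [SFinite ν] {p : ℝ≥0∞} (hp : 1 ≤ p)
    {F : α → β → ℝ≥0∞} (hF : Measurable (Function.uncurry F)) {b : β → ℝ≥0∞} (hb : Measurable b)
    (h : ∀ y, eLpNorm (fun x => F x y) p μ ≤ b y) :
    eLpNorm (fun x => ∫⁻ y, F x y ∂ν) p μ ≤ ∫⁻ y, b y ∂ν := by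
  have hp0 : p ≠ 0 := (zero_lt_one.trans_le hp).ne'
  by_cases ht : p = ∞
  · subst ht
    have hms : MeasurableSet {z : α × β | F z.1 z.2 ≤ b z.2} :=
      measurableSet_le hF (hb.comp measurable_snd)
    have hae : ∀ᵐ x ∂μ, ∀ᵐ y ∂ν, F x y ≤ b y := by
      rw [Measure.ae_ae_comm hms]
      refine Filter.Eventually.of_forall fun y => ?_
      have hy := h y
      rw [eLpNorm_exponent_top, eLpNormEssSup] at hy
      filter_upwards [ENNReal.ae_le_essSup (μ := μ) fun x => ‖F x y‖ₑ] with x hx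
      exact hx.trans hy
    rw [eLpNorm_exponent_top]
    refine essSup_le_of_ae_le _ ?_
    filter_upwards [hae] with x hx
    exact lintegral_mono_ae hx
  · have hr : 1 ≤ p.toReal := by
      simpa using ENNReal.toReal_mono ht hp
    have hr0 : 0 < p.toReal := by linarith
    simp only [eLpNorm_eq_lintegral_rpow_enorm_toReal hp0 ht, one_div, enorm_eq_self,
      ENNReal.rpow_inv_le_iff hr0] at h ⊢
    exact lintegral_rpow_lintegral_le hr hF hb h

/-! ### Young's convolution inequality -/

/-- Young's convolution inequality for finite exponents; both sides may be infinite. -/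
theorem young_lintegral {G : Type*} [MeasurableSpace G] [AddCommGroup G] [MeasurableAdd₂ G]
    [MeasurableNeg G] {μ : Measure G} [SFinite μ] [μ.IsAddLeftInvariant] [μ.IsNegInvariant]
    {r₁ r₂ r : ℝ} (h₁ : 0 < r₁) (h₂ : 0 < r₂) (h : 0 < r) (h₁r : r₁ ≤ r) (h₂r : r₂ ≤ r)
    (he : 1 / r₁ + 1 / r₂ = 1 + 1 / r) {f g : G → ℝ≥0∞} (hf : Measurable f) (hg : Measurable g) :
    (∫⁻ y, (∫⁻ z, f z * g (y - z) ∂μ) ^ r ∂μ) ^ (1 / r)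
      ≤ (∫⁻ z, f z ^ r₁ ∂μ) ^ (1 / r₁) * (∫⁻ z, g z ^ r₂ ∂μ) ^ (1 / r₂) := by
  set A := ∫⁻ z, f z ^ r₁ ∂μ with hA
  set C := ∫⁻ z, g z ^ r₂ ∂μ with hC
  have hs₁ : 0 ≤ 1 / r₁ - 1 / r := sub_nonneg.2 (one_div_le_one_div_of_le h₁ h₁r)
  have hs₂ : 0 ≤ 1 / r₂ - 1 / r := sub_nonneg.2 (one_div_le_one_div_of_le h₂ h₂r)
  have hr : 0 ≤ 1 / r := by positivity
  have hgy : ∀ y, Measurable (fun z => g (y - z)) := fun y =>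
    hg.comp (measurable_const.sub measurable_id)
  have hpt : ∀ y, (∫⁻ z, f z * g (y - z) ∂μ) ^ r
      ≤ (∫⁻ z, f z ^ r₁ * g (y - z) ^ r₂ ∂μ) * (A ^ (r / r₁ - 1) * C ^ (r / r₂ - 1)) := by
    intro y
    have hH := ENNReal.lintegral_prod_norm_pow_le (μ := μ) Finset.univ
      (f := ![fun z => f z ^ r₁ * g (y - z) ^ r₂, fun z => f z ^ r₁, fun z => g (y - z) ^ r₂])
      (p := ![1 / r, 1 / r₁ - 1 / r, 1 / r₂ - 1 / r])
      (by
        intro i _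
        fin_cases i
        · exact ((hf.pow_const _).mul ((hgy y).pow_const _)).aemeasurable
        · exact (hf.pow_const _).aemeasurable
        · exact ((hgy y).pow_const _).aemeasurable)
      (by simp only [Fin.sum_univ_three, Matrix.cons_val]; linarith)
      (by intro i _; fin_cases i <;> assumption)
    simp only [Fin.prod_univ_three, Matrix.cons_val] at hH
    have hprod : ∀ z, (f z ^ r₁ * g (y - z) ^ r₂) ^ (1 / r) * (f z ^ r₁) ^ (1 / r₁ - 1 / r)
        * (g (y - z) ^ r₂) ^ (1 / r₂ - 1 / r) = f z * g (y - z) := by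
      intro z
      have key : ∀ (a : ℝ≥0∞) (s : ℝ), 0 < s → 0 ≤ 1 / s - 1 / r →
          (a ^ s) ^ (1 / r) * (a ^ s) ^ (1 / s - 1 / r) = a := by
        intro a s hs hsr
        rw [← ENNReal.rpow_add_of_nonneg _ _ hr hsr, ← ENNReal.rpow_mul]
        have : s * (1 / r + (1 / s - 1 / r)) = 1 := by field_simp; ring
        rw [this, ENNReal.rpow_one]
      rw [ENNReal.mul_rpow_of_nonneg _ _ hr]
      calc _ = ((f z ^ r₁) ^ (1 / r) * (f z ^ r₁) ^ (1 / r₁ - 1 / r))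
            * ((g (y - z) ^ r₂) ^ (1 / r) * (g (y - z) ^ r₂) ^ (1 / r₂ - 1 / r)) := by ring
        _ = _ := by rw [key _ _ h₁ hs₁, key _ _ h₂ hs₂]
    simp only [hprod] at hH
    rw [lintegral_sub_left_eq_self (fun z => g z ^ r₂) y, ← hA, ← hC] at hH
    calc _ ≤ _ := ENNReal.rpow_le_rpow hH h.le
      _ = _ := by
        rw [ENNReal.mul_rpow_of_nonneg _ _ h.le, ENNReal.mul_rpow_of_nonneg _ _ h.le,
          ← ENNReal.rpow_mul, ← ENNReal.rpow_mul, ← ENNReal.rpow_mul, mul_assoc]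
        have e0 : 1 / r * r = 1 := by field_simp
        have e1 : (1 / r₁ - 1 / r) * r = r / r₁ - 1 := by field_simp
        have e2 : (1 / r₂ - 1 / r) * r = r / r₂ - 1 := by field_simp
        rw [e0, e1, e2, ENNReal.rpow_one]
  have hmeas : Measurable (Function.uncurry fun y z => f z ^ r₁ * g (y - z) ^ r₂) :=
    ((hf.comp measurable_snd).pow_const _).mul
      ((hg.comp (measurable_fst.sub measurable_snd)).pow_const _)
  have htot : ∫⁻ y, (∫⁻ z, f z * g (y - z) ∂μ) ^ r ∂μ ≤ A ^ (r / r₁) * C ^ (r / r₂) := by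
    have key : ∀ (a : ℝ≥0∞) (s : ℝ), 0 < s → s ≤ r → a * a ^ (r / s - 1) = a ^ (r / s) := by
      intro a s hs hsr
      have h1 : 0 ≤ r / s - 1 := by
        rw [sub_nonneg, le_div_iff₀ hs]
        linarith
      nth_rewrite 1 [← ENNReal.rpow_one a]
      rw [← ENNReal.rpow_add_of_nonneg _ _ zero_le_one h1]
      congr 1
      ring
    calc _ ≤ ∫⁻ y, (∫⁻ z, f z ^ r₁ * g (y - z) ^ r₂ ∂μ)
            * (A ^ (r / r₁ - 1) * C ^ (r / r₂ - 1)) ∂μ := lintegral_mono hpt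
      _ = (∫⁻ y, ∫⁻ z, f z ^ r₁ * g (y - z) ^ r₂ ∂μ ∂μ)
            * (A ^ (r / r₁ - 1) * C ^ (r / r₂ - 1)) :=
          lintegral_mul_const _ hmeas.lintegral_prod_right'
      _ = (A * C) * (A ^ (r / r₁ - 1) * C ^ (r / r₂ - 1)) := by
          congr 1
          rw [lintegral_lintegral_swap hmeas.aemeasurable]
          have hin : ∀ z, ∫⁻ y, f z ^ r₁ * g (y - z) ^ r₂ ∂μ = f z ^ r₁ * C := by
            intro z
            have hgz : Measurable (fun y => g (y - z)) :=
              hg.comp (measurable_id.sub measurable_const)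
            rw [lintegral_const_mul _ (hgz.pow_const _),
              lintegral_sub_right_eq_self (fun y => g y ^ r₂) z]
          simp only [hin]
          rw [lintegral_mul_const _ (hf.pow_const _)]
      _ = (A * A ^ (r / r₁ - 1)) * (C * C ^ (r / r₂ - 1)) := by ring
      _ = _ := by rw [key _ _ h₁ h₁r, key _ _ h₂ h₂r]
  calc _ ≤ _ := ENNReal.rpow_le_rpow htot hr
    _ = _ := by
      rw [ENNReal.mul_rpow_of_nonneg _ _ hr, ← ENNReal.rpow_mul, ← ENNReal.rpow_mul]
      have e1 : r / r₁ * (1 / r) = 1 / r₁ := by field_simp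
      have e2 : r / r₂ * (1 / r) = 1 / r₂ := by field_simp
      rw [e1, e2]

/-- Young's convolution inequality for all exponents in `[1,∞]`. -/
theorem young_eLpNormENN {G : Type*} [MeasurableSpace G] [AddCommGroup G] [MeasurableAdd₂ G]
    [MeasurableNeg G] {μ : Measure G} [SFinite μ] [μ.IsAddLeftInvariant] [μ.IsNegInvariant]
    {q₁ q₂ q : ℝ≥0∞} (hq₁ : 1 ≤ q₁) (hq₂ : 1 ≤ q₂) (hq : 1 ≤ q)
    (hqe : 1 / q₁ + 1 / q₂ = 1 + 1 / q) {f g : G → ℝ≥0∞} (hf : Measurable f) (hg : Measurable g) :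
    eLpNormENN (fun y => ∫⁻ z, f z * g (y - z) ∂μ) q μ
      ≤ eLpNormENN f q₁ μ * eLpNormENN g q₂ μ := by
  have hn₁ : q₁ ≠ 0 := (zero_lt_one.trans_le hq₁).ne'
  have hn₂ : q₂ ≠ 0 := (zero_lt_one.trans_le hq₂).ne'
  have hn : q ≠ 0 := (zero_lt_one.trans_le hq).ne'
  simp only [one_div] at hqe
  have hi₁ : q₁⁻¹ ≤ 1 := ENNReal.inv_le_one.2 hq₁
  have hi₂ : q₂⁻¹ ≤ 1 := ENNReal.inv_le_one.2 hq₂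
  have hi : q⁻¹ ≤ 1 := ENNReal.inv_le_one.2 hq
  have hgy : ∀ y, Measurable (fun z => g (y - z)) := fun y =>
    hg.comp (measurable_const.sub measurable_id)
  simp only [eLpNormENN, hn, hn₁, hn₂, if_false]
  by_cases ht₁ : q₁ = ∞
  · -- The exponent relation leaves only `q₂ = 1` and `q = ∞`.
    subst ht₁
    have hz : q⁻¹ = 0 := by
      have h1 : 1 + q⁻¹ ≤ 1 + 0 := by simpa [← hqe] using hi₂
      exact nonpos_iff_eq_zero.1 ((ENNReal.add_le_add_iff_left ENNReal.one_ne_top).1 h1)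
    have hq2 : q₂ = 1 := by simpa [hz] using hqe
    have hqt : q = ∞ := ENNReal.inv_eq_zero.1 hz
    subst hq2 hqt
    simp only [if_true, ENNReal.one_ne_top, if_false, ENNReal.toReal_one, ENNReal.rpow_one, div_one]
    refine essSup_le_of_ae_le _ (Filter.Eventually.of_forall fun y => ?_)
    calc ∫⁻ z, f z * g (y - z) ∂μ ≤ ∫⁻ z, essSup f μ * g (y - z) ∂μ := by
          refine lintegral_mono_ae ?_
          filter_upwards [ENNReal.ae_le_essSup (μ := μ) f] with z hz
          gcongr
      _ = essSup f μ * ∫⁻ z, g z ∂μ := by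
          rw [lintegral_const_mul _ (hgy y), lintegral_sub_left_eq_self]
  by_cases ht₂ : q₂ = ∞
  · subst ht₂
    have hz : q⁻¹ = 0 := by
      have h1 : 1 + q⁻¹ ≤ 1 + 0 := by simpa [← hqe] using hi₁
      exact nonpos_iff_eq_zero.1 ((ENNReal.add_le_add_iff_left ENNReal.one_ne_top).1 h1)
    have hq1 : q₁ = 1 := by simpa [hz] using hqe
    have hqt : q = ∞ := ENNReal.inv_eq_zero.1 hz
    subst hq1 hqt
    simp only [if_true, ENNReal.one_ne_top, if_false, ENNReal.toReal_one, ENNReal.rpow_one, div_one]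
    refine essSup_le_of_ae_le _ (Filter.Eventually.of_forall fun y => ?_)
    calc ∫⁻ z, f z * g (y - z) ∂μ ≤ ∫⁻ z, f z * essSup g μ ∂μ := by
          refine lintegral_mono_ae ?_
          filter_upwards [(quasiMeasurePreserving_sub_left μ y).ae
            (ENNReal.ae_le_essSup (μ := μ) g)] with z hz
          gcongr
      _ = (∫⁻ z, f z ∂μ) * essSup g μ := by
          rw [lintegral_mul_const _ hf]
  have hp₁ : 0 < q₁.toReal := ENNReal.toReal_pos hn₁ ht₁
  have hp₂ : 0 < q₂.toReal := ENNReal.toReal_pos hn₂ ht₂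
  have hre : q₁.toReal⁻¹ + q₂.toReal⁻¹ = 1 + q.toReal⁻¹ := by
    have := congrArg ENNReal.toReal hqe
    rwa [ENNReal.toReal_add (by simpa using hn₁) (by simpa using hn₂),
      ENNReal.toReal_add (by simp) (by simpa using hn), ENNReal.toReal_inv, ENNReal.toReal_inv,
      ENNReal.toReal_inv, ENNReal.toReal_one] at this
  simp only [ht₁, ht₂, if_false]
  by_cases ht : q = ∞
  · subst ht
    simp only [if_true]
    refine essSup_le_of_ae_le _ (Filter.Eventually.of_forall fun y => ?_)
    have hH := ENNReal.lintegral_mul_norm_pow_le (μ := μ) (f := fun z => f z ^ q₁.toReal)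
      (g := fun z => g (y - z) ^ q₂.toReal) (hf.pow_const _).aemeasurable
      ((hgy y).pow_const _).aemeasurable (p := 1 / q₁.toReal) (q := 1 / q₂.toReal)
      (by positivity) (by positivity) (by simpa using hre)
    rw [lintegral_sub_left_eq_self (fun z => g z ^ q₂.toReal) y] at hH
    simpa only [← ENNReal.rpow_mul, mul_one_div_cancel hp₁.ne', mul_one_div_cancel hp₂.ne',
      ENNReal.rpow_one] using hH
  · have hp : 0 < q.toReal := ENNReal.toReal_pos hn ht
    simp only [ht, if_false]
    have h1₁ : q₁.toReal⁻¹ ≤ 1 := inv_le_one_of_one_le₀ (by simpa using ENNReal.toReal_mono ht₁ hq₁)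
    have h1₂ : q₂.toReal⁻¹ ≤ 1 := inv_le_one_of_one_le₀ (by simpa using ENNReal.toReal_mono ht₂ hq₂)
    exact young_lintegral hp₁ hp₂ hp ((inv_le_inv₀ hp hp₁).1 (by linarith))
      ((inv_le_inv₀ hp hp₂).1 (by linarith)) (by simpa only [one_div] using hre) hf hg

/-! ### Composition of kernels -/

/-- The kernel-level form of Corollary 2.14: the Moyal product maps
`M^{p₁,q₁} × M^{p₂,q₂}` continuously into `M^{p,q}` when `1/p = 1/p₁ + 1/p₂` and
`1/q₁ + 1/q₂ = 1 + 1/q`. -/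
theorem composed_kernel_modulation_estimate (n : ℕ)
    (p₁ p₂ p q₁ q₂ q : ℝ≥0∞)
    (hp₁ : 1 ≤ p₁) (hp₂ : 1 ≤ p₂) (hp : 1 ≤ p)
    (hq₁ : 1 ≤ q₁) (hq₂ : 1 ≤ q₂) (hq : 1 ≤ q)
    (hpe : 1 / p = 1 / p₁ + 1 / p₂)
    (hqe : 1 / q₁ + 1 / q₂ = 1 + 1 / q)
    (K₁ K₂ K : EuclideanSpace ℝ (Fin n) × EuclideanSpace ℝ (Fin n) → ℂ)
    (hK₁ : Measurable K₁) (hK₂ : Measurable K₂)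
    (β₁ β₂ : EuclideanSpace ℝ (Fin n) → ℝ≥0∞)
    (hβ₁m : Measurable β₁) (hβ₂m : Measurable β₂)
    (hβ₁ : ∀ Y : EuclideanSpace ℝ (Fin n),
      eLpNorm (fun X => K₁ (X, X + Y)) p₁ volume ≤ β₁ Y)
    (hβ₂ : ∀ Y : EuclideanSpace ℝ (Fin n),
      eLpNorm (fun X => K₂ (X, X + Y)) p₂ volume ≤ β₂ Y)
    (hβ₁q : eLpNormENN β₁ q₁ volume < ∞)
    (hβ₂q : eLpNormENN β₂ q₂ volume < ∞)
    (hint : ∀ x z : EuclideanSpace ℝ (Fin n),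
      Integrable (fun y => K₁ (x, y) * K₂ (y, z)))
    (hK : ∀ x z : EuclideanSpace ℝ (Fin n), K (x, z) = ∫ y, K₁ (x, y) * K₂ (y, z))
    (β : EuclideanSpace ℝ (Fin n) → ℝ≥0∞)
    (hβ : ∀ Y, β Y = ∫⁻ Z, β₁ Z * β₂ (Y - Z)) :
    (∀ Y : EuclideanSpace ℝ (Fin n),
      eLpNorm (fun X => K (X, X + Y)) p volume ≤ β Y) ∧
    eLpNormENN β q volume ≤ eLpNormENN β₁ q₁ volume * eLpNormENN β₂ q₂ volume := by
  constructor
  · intro Y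
    rw [hβ]
    -- The integrand after the substitution `y = X + Z`.
    let F : EuclideanSpace ℝ (Fin n) → EuclideanSpace ℝ (Fin n) → ℝ≥0∞ :=
      fun X Z => ‖K₁ (X, X + Z) * K₂ (X + Z, X + Y)‖ₑ
    have hF : Measurable (Function.uncurry F) := by
      refine Measurable.enorm (Measurable.mul ?_ ?_)
      · exact hK₁.comp (measurable_fst.prodMk (measurable_fst.add measurable_snd))
      · exact hK₂.comp ((measurable_fst.add measurable_snd).prodMk
          (measurable_fst.add measurable_const))
    have hKF : eLpNorm (fun X => K (X, X + Y)) p volume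
        ≤ eLpNorm (fun X => ∫⁻ Z, F X Z) p volume := by
      refine eLpNorm_mono_enorm fun X => ?_
      rw [hK, enorm_eq_self,
        ← integral_add_left_eq_self (fun y => K₁ (X, y) * K₂ (y, X + Y)) X]
      exact enorm_integral_le_lintegral_enorm _
    refine hKF.trans (eLpNorm_lintegral_le hp hF
      (hβ₁m.mul (hβ₂m.comp (measurable_const.sub measurable_id))) fun Z => ?_)
    have : ENNReal.HolderTriple p₁ p₂ p := ⟨by simpa only [one_div] using hpe.symm⟩
    have hm₁ : Measurable (fun X => K₁ (X, X + Z)) :=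
      hK₁.comp (measurable_id.prodMk (measurable_id.add measurable_const))
    have hm₂ : Measurable (fun X => K₂ (X, X + (Y - Z))) :=
      hK₂.comp (measurable_id.prodMk (measurable_id.add measurable_const))
    have hshift : (fun X => K₂ (X + Z, X + Y)) = (fun X => K₂ (X, X + (Y - Z))) ∘ (· + Z) := by
      funext X
      simp only [Function.comp_apply]
      congr 2
      abel
    have hm₂' : Measurable (fun X => K₂ (X + Z, X + Y)) := by
      rw [hshift]
      exact hm₂.comp (measurable_id.add measurable_const)
    calc eLpNorm (fun X => F X Z) p volume
        = eLpNorm ((fun X => K₁ (X, X + Z)) • fun X => K₂ (X + Z, X + Y)) p volume :=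
          eLpNorm_enorm _
      _ ≤ eLpNorm (fun X => K₁ (X, X + Z)) p₁ volume
          * eLpNorm (fun X => K₂ (X + Z, X + Y)) p₂ volume :=
          eLpNorm_smul_le_mul_eLpNorm hm₂'.aestronglyMeasurable hm₁.aestronglyMeasurable
      _ ≤ β₁ Z * β₂ (Y - Z) := by
          rw [hshift, eLpNorm_comp_measurePreserving hm₂.aestronglyMeasurable
            (measurePreserving_add_right volume Z)]
          exact mul_le_mul' (hβ₁ Z) (hβ₂ (Y - Z))
  · rw [funext hβ]
    exact young_eLpNormENN hq₁ hq₂ hq hqe hβ₁m hβ₂m
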